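/- Let $k$ be a bounded strictly increasing function on $[-1,1]$ and $f, g \in C(S^n, \mathbb{R})$ non-constant functions satisfying the equality $\int_{S^n}\int_{S^n} k(x\cdot y) f(x) g(y)\, d\mu(x) d\mu(y) = \int_{S^n}\int_{S^n} k(x\cdot y) f^*(x) g^*(y)\, d\mu(x) d\mu(y)$, where $f^*, g^*$ are the symmetric decreasing rearrangements of $f, g$ on the sphere. Then $f$ and $g$ are radial symmetric and decreasing with respect to the same point. -/

import Mathlib

open MeasureTheory Metric Set
open scoped RealInnerProductSpace

noncomputable section

/-!
Polarizing `f` and `g` with respect to a half sphere exchanges values at mirror points so that the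
larger one lies in the half sphere. In terms of the reflection `σ` this preserves `f + f ∘ σ` and
replaces `f - f ∘ σ` by its absolute value on the half sphere. Grouping the double integral over the
four points `(x, y)`, `(x, σ y)`, `(σ x, y)`, `(σ x, σ y)` shows that it does not decrease, and that
it is unchanged only if `f - f ∘ σ` and `g - g ∘ σ` have the same constant sign on the half sphere
or one of them vanishes.

The functions equidistributed with `f` that are at least as regular form a compact set, stable under
polarization. Maximizing the component of the first moments `∫ F(x) x + ∫ G(x) x` along the north
pole, among the pairs with at least the given double integral, yields a pair fixed by every
polarization towards the pole, that is, `(f*, g*)`: this is the Riesz inequality. Applied to the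
polarizations of `f` and `g`, it shows that in the equality case no polarization increases the
double integral. Non-constant functions are moved by the reflections along a dense set of
directions, so `f` and `g` are simultaneously polarized along `u` or `-u` for every direction `u`;
the first moment of `f` selects the sign, and its direction is the common pole.
-/

section Reflection

open Filter Topology

variable {E : Type*} [NormedAddCommGroup E] [InnerProductSpace ℝ E]

local notation "𝕊" => sphere (0 : E) 1

lemma inner_mem_Icc_of_mem_sphere (x y : 𝕊) : ⟪(x : E), (y : E)⟫ ∈ Icc (-1 : ℝ) 1 := by
  simpa [abs_le] using abs_real_inner_le_norm (x : E) y

lemma inner_sub_pos_of_ne {x y : 𝕊} (h : x ≠ y) : 0 < ⟪(x : E) - y, (x : E)⟫ := by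
  have hinner : ⟪(x : E), (y : E)⟫ < 1 :=
    (inner_lt_one_iff_real_of_norm_eq_one (by simp) (by simp)).2 (Subtype.coe_ne_coe.2 h)
  rw [inner_sub_left, real_inner_self_eq_norm_sq, norm_eq_of_mem_sphere, real_inner_comm]
  linarith

/-- The reflection of the unit sphere in the hyperplane orthogonal to `u`; it is the identity
when `u = 0`. -/
def sphereReflection (u : E) : 𝕊 ≃ᵢ 𝕊 where
  toFun x := ⟨(ℝ ∙ u)ᗮ.reflection x, by simp⟩
  invFun x := ⟨(ℝ ∙ u)ᗮ.reflection x, by simp⟩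
  left_inv x := by simp
  right_inv x := by simp
  isometry_toFun := .of_dist_eq fun x y => by simp [Subtype.dist_eq]

lemma coe_sphereReflection (u : E) (x : 𝕊) :
    (sphereReflection u x : E) = x - (2 * (⟪u, (x : E)⟫ / ⟪u, u⟫)) • u := by
  simp [sphereReflection, Submodule.reflection_orthogonal_apply,
    Submodule.reflection_singleton_apply, mul_smul, two_smul]

@[simp]
lemma sphereReflection_sphereReflection (u : E) (x : 𝕊) :
    sphereReflection u (sphereReflection u x) = x :=
  (sphereReflection u).left_inv x

lemma inner_sphereReflection_left (u : E) (x y : 𝕊) :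
    ⟪(sphereReflection u x : E), (y : E)⟫ = ⟪(x : E), (sphereReflection u y : E)⟫ := by
  simp only [coe_sphereReflection, inner_sub_left, inner_sub_right, real_inner_smul_left,
    real_inner_smul_right, real_inner_comm u]
  ring

lemma inner_sphereReflection_right (u v : E) (x : 𝕊) :
    ⟪v, (sphereReflection u x : E)⟫ =
      ⟪v, (x : E)⟫ - 2 * (⟪u, (x : E)⟫ / ⟪u, u⟫) * ⟪v, u⟫ := by
  rw [coe_sphereReflection, inner_sub_right, inner_smul_right]

lemma inner_sphereReflection_self (u : E) (x : 𝕊) :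
    ⟪u, (sphereReflection u x : E)⟫ = -⟪u, (x : E)⟫ := by
  rcases eq_or_ne u 0 with rfl | hu
  · simp
  have huu : ⟪u, u⟫ ≠ 0 := inner_self_ne_zero.2 hu
  rw [inner_sphereReflection_right]
  field_simp
  ring

lemma sphereReflection_eq_self {u : E} {x : 𝕊} (h : ⟪u, (x : E)⟫ = 0) :
    sphereReflection u x = x := by
  ext; simp [coe_sphereReflection, h]

lemma sphereReflection_smul {c : ℝ} (hc : c ≠ 0) (u : E) (x : 𝕊) :
    sphereReflection (c • u) x = sphereReflection u x := by
  simp [sphereReflection, Submodule.span_singleton_smul_eq hc.isUnit]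

lemma sphereReflection_neg (u : E) (x : 𝕊) : sphereReflection (-u) x = sphereReflection u x := by
  simpa using sphereReflection_smul (neg_ne_zero.2 one_ne_zero) u x

lemma sphereReflection_sub (x y : 𝕊) : sphereReflection ((x : E) - y) x = y := by
  ext; exact Submodule.reflection_sub (by simp)

lemma continuousAt_sphereReflection_left (x : 𝕊) {u : E} (hu : u ≠ 0) :
    ContinuousAt (fun v : E => sphereReflection v x) u := by
  simp only [Topology.IsEmbedding.subtypeVal.continuousAt_iff, Function.comp_def,
    coe_sphereReflection]
  have huu : ⟪u, u⟫ ≠ 0 := inner_self_ne_zero.2 hu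
  fun_prop (disch := assumption)

lemma dist_sphereReflection_right_le {u : E} {x y : 𝕊}
    (h : ⟪u, (x : E)⟫ * ⟪u, (y : E)⟫ ≤ 0) : dist x (sphereReflection u y) ≤ dist x y := by
  have hquot : 2 * (⟪u, (y : E)⟫ / ⟪u, u⟫) * ⟪(x : E), u⟫ ≤ 0 := by
    rw [real_inner_comm u (x : E)]
    calc 2 * (⟪u, (y : E)⟫ / ⟪u, u⟫) * ⟪u, (x : E)⟫
        = 2 * (⟪u, (x : E)⟫ * ⟪u, (y : E)⟫ / ⟪u, u⟫) := by ring
      _ ≤ 0 := mul_nonpos_of_nonneg_of_nonpos zero_le_two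
        (div_nonpos_of_nonpos_of_nonneg h real_inner_self_nonneg)
  rw [Subtype.dist_eq, Subtype.dist_eq, dist_eq_norm, dist_eq_norm]
  refine le_of_sq_le_sq ?_ (norm_nonneg _)
  simp only [norm_sub_sq_real, norm_eq_of_mem_sphere, inner_sphereReflection_right]
  linarith

/-- The gap `⟪u, x⟫ (F x - F (σ x))`, where `σ` is the reflection along `u`, is positive exactly
when the larger of the two values of `F` at `x` and its mirror point is the one taken in the half
sphere with pole `u`. -/
def reflectionGap (u : E) (F : 𝕊 → ℝ) (x : 𝕊) : ℝ :=
  ⟪u, (x : E)⟫ * (F x - F (sphereReflection u x))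

lemma reflectionGap_neg (u : E) (F : 𝕊 → ℝ) (x : 𝕊) :
    reflectionGap (-u) F x = -reflectionGap u F x := by
  simp [reflectionGap, sphereReflection_neg]

@[fun_prop]
lemma continuous_reflectionGap (u : E) {F : 𝕊 → ℝ} (hF : Continuous F) :
    Continuous (reflectionGap u F) := by
  unfold reflectionGap
  fun_prop

lemma continuousAt_reflectionGap_left {F : 𝕊 → ℝ} (hF : Continuous F) (x : 𝕊) {u : E}
    (hu : u ≠ 0) : ContinuousAt (fun v => reflectionGap v F x) u := by
  have hσ : ContinuousAt (fun v => F (sphereReflection v x)) u :=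
    hF.continuousAt.comp (continuousAt_sphereReflection_left x hu)
  exact (continuousAt_id.inner continuousAt_const).mul (continuousAt_const.sub hσ)

/-- `F` is polarized along `u` if it is at least as large on the half sphere with pole `u` as at
the mirror points. -/
def IsPolarized (u : E) (F : 𝕊 → ℝ) : Prop :=
  ∀ x, 0 ≤ reflectionGap u F x

lemma isPolarized_of_frequently {F : 𝕊 → ℝ} (hF : Continuous F) {u : E} (hu : u ≠ 0)
    (h : ∃ᶠ v in 𝓝 u, IsPolarized v F) : IsPolarized u F := fun x =>
  isClosed_Ici.mem_of_frequently_of_tendsto (h.mono fun _ hv => hv x)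
    (continuousAt_reflectionGap_left hF x hu)

end Reflection

section SymmDecreasing

open Filter Topology

variable {E : Type*} [NormedAddCommGroup E] [InnerProductSpace ℝ E]

local notation "𝕊" => sphere (0 : E) 1

/-- `F` is radially symmetric and decreasing with respect to `p`: its values only depend on the
inner product with `p` and increase with it. -/
def IsSymmDecreasing (p : E) (F : 𝕊 → ℝ) : Prop :=
  ∀ ⦃x y : 𝕊⦄, ⟪(x : E), p⟫ ≤ ⟪(y : E), p⟫ → F x ≤ F y

lemma IsSymmDecreasing.monovary {p : E} {F G : 𝕊 → ℝ} (hF : IsSymmDecreasing p F)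
    (hG : IsSymmDecreasing p G) : Monovary F G := fun _ _ hlt =>
  hF (not_lt.1 fun h => hlt.not_ge (hG h.le))

lemma isSymmDecreasing_smul_iff {c : ℝ} (hc : 0 < c) {p : E} {F : 𝕊 → ℝ} :
    IsSymmDecreasing (c • p) F ↔ IsSymmDecreasing p F := by
  simp only [IsSymmDecreasing, real_inner_smul_right, mul_le_mul_iff_right₀ hc]

lemma isSymmDecreasing_iff_exists_monotoneOn {p : E} (hp : p ∈ sphere (0 : E) 1) {F : 𝕊 → ℝ} :
    IsSymmDecreasing p F ↔
      ∃ φ : ℝ → ℝ, MonotoneOn φ (Icc (-1) 1) ∧ ∀ x : 𝕊, F x = φ ⟪(x : E), p⟫ := by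
  refine ⟨fun hF => ?_, ?_⟩
  · have hle_pole : ∀ x : 𝕊, F x ≤ F ⟨p, hp⟩ := fun x => hF <| by
      simpa [mem_sphere_zero_iff_norm.1 hp] using (inner_mem_Icc_of_mem_sphere x ⟨p, hp⟩).2
    have hbdd : ∀ t : ℝ, BddAbove (F '' {x : 𝕊 | ⟪(x : E), p⟫ ≤ t}) := fun t =>
      ⟨F ⟨p, hp⟩, forall_mem_image.2 fun x _ => hle_pole x⟩
    refine ⟨fun t => sSup (F '' {x : 𝕊 | ⟪(x : E), p⟫ ≤ t}), fun s hs t _ hst => ?_, fun x => ?_⟩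
    · refine csSup_le_csSup (hbdd t) (.image _ ⟨-⟨p, hp⟩, ?_⟩)
        (image_mono fun x hx => le_trans hx hst)
      simpa [mem_sphere_zero_iff_norm.1 hp] using hs.1
    · exact (IsGreatest.csSup_eq
        ⟨mem_image_of_mem F (le_refl ⟪(x : E), p⟫), forall_mem_image.2 fun y hy => hF hy⟩).symm
  · rintro ⟨φ, hφ, hF⟩ x y hxy
    rw [hF x, hF y]
    exact hφ (inner_mem_Icc_of_mem_sphere x ⟨p, hp⟩) (inner_mem_Icc_of_mem_sphere y ⟨p, hp⟩) hxy

lemma isSymmDecreasing_of_isPolarized {F : 𝕊 → ℝ} (hF : Continuous F) {p : E} (hp : p ≠ 0)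
    (h : ∀ u : E, 0 < ⟪u, p⟫ → IsPolarized u F) : IsSymmDecreasing p F := by
  intro x y hxy
  rcases eq_or_ne y x with rfl | hne
  · rfl
  have hpol : IsPolarized ((y : E) - x) F := by
    have htendsto : Tendsto (fun ε : ℝ => (y : E) - x + ε • p) (𝓝[>] 0) (𝓝 ((y : E) - x)) := by
      refine Tendsto.mono_left (Continuous.tendsto' (by fun_prop) _ _ ?_) nhdsWithin_le_nhds
      simp
    refine isPolarized_of_frequently hF (sub_ne_zero.2 (Subtype.coe_ne_coe.2 hne))
      (htendsto.frequently (Eventually.frequently ?_))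
    filter_upwards [self_mem_nhdsWithin] with ε hε
    refine h _ ?_
    rw [inner_add_left, inner_sub_left, real_inner_smul_left]
    exact add_pos_of_nonneg_of_pos (sub_nonneg.2 hxy) (mul_pos hε (real_inner_self_pos.2 hp))
  have hgap := hpol y
  rw [reflectionGap, sphereReflection_sub] at hgap
  exact sub_nonneg.1 (nonneg_of_mul_nonneg_right hgap (inner_sub_pos_of_ne hne))

end SymmDecreasing

section ModulusLE

variable {X Y : Type*} [PseudoMetricSpace X] [PseudoMetricSpace Y]

/-- Every modulus of continuity of `f` is one of `F`. -/
def ModulusLE (F f : X → Y) : Prop :=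
  ∀ ⦃δ ε : ℝ⦄, (∀ x y, dist x y ≤ δ → dist (f x) (f y) ≤ ε) →
    ∀ x y, dist x y ≤ δ → dist (F x) (F y) ≤ ε

lemma ModulusLE.refl (f : X → Y) : ModulusLE f f := fun _ _ h => h

lemma ModulusLE.trans {F f g : X → Y} (hF : ModulusLE F f) (hf : ModulusLE f g) : ModulusLE F g :=
  fun _ _ h => hF (hf h)

lemma isClosed_setOf_modulusLE (f : X → Y) : IsClosed {F : C(X, Y) | ModulusLE F f} := by
  simp only [ModulusLE, ofPred_forall]
  refine isClosed_iInter fun δ => isClosed_iInter fun ε => isClosed_iInter fun _ =>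
    isClosed_iInter fun x => isClosed_iInter fun y => isClosed_iInter fun _ =>
    isClosed_le ?_ continuous_const
  fun_prop

lemma equicontinuous_of_modulusLE [CompactSpace X] {f : X → Y} (hf : Continuous f) {ι : Type*}
    {F : ι → X → Y} (hF : ∀ i, ModulusLE (F i) f) : Equicontinuous F := by
  refine (Metric.uniformEquicontinuous_iff.2 fun ε hε => ?_).equicontinuous
  obtain ⟨δ, hδ, hfδ⟩ := Metric.uniformContinuous_iff.1
    (CompactSpace.uniformContinuous_of_continuous hf) (ε / 2) (half_pos hε)
  refine ⟨δ / 2, half_pos hδ, fun x y hxy i => ?_⟩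
  exact (hF i (fun a b hab => (hfδ (hab.trans_lt (half_lt_self hδ))).le) x y hxy.le).trans_lt
    (half_lt_self hε)

lemma isCompact_setOf_range_subset_modulusLE [CompactSpace X] {f : X → Y} (hf : Continuous f)
    {K : Set Y} (hK : IsCompact K) (hKclosed : IsClosed K) :
    IsCompact {F : C(X, Y) | range F ⊆ K ∧ ModulusLE F f} := by
  set A := {F : C(X, Y) | range F ⊆ K ∧ ModulusLE F f}
  have hrange : IsClosed {F : C(X, Y) | range F ⊆ K} := by
    simpa only [mapsTo_univ_iff_range_subset] using
      ContinuousMap.isClosed_setOfPred_mapsTo hKclosed univ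
  have hA : IsClosed A := hrange.inter (isClosed_setOf_modulusLE f)
  let e := (ContinuousMap.isometryEquivBoundedOfCompact X Y).toHomeomorph
  refine e.isCompact_image.1 (BoundedContinuousFunction.arzela_ascoli₂ K hK _
    (e.isClosed_image.2 hA) ?_ (equicontinuous_of_modulusLE hf ?_))
  · rintro _ x ⟨F, hF, rfl⟩
    exact hF.1 (mem_range_self x)
  · rintro ⟨_, F, hF, rfl⟩
    exact hF.2

end ModulusLE

section Polarization

variable {E : Type*} [NormedAddCommGroup E] [InnerProductSpace ℝ E]

local notation "𝕊" => sphere (0 : E) 1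

/-- The two-point symmetrization of `F` with respect to the half sphere with pole `u`: each pair of
values at mirror points is rearranged so that the larger one is taken in the half sphere. -/
def polarization (u : E) (F : C(𝕊, ℝ)) : C(𝕊, ℝ) where
  toFun x := if 0 ≤ ⟪u, (x : E)⟫ then max (F x) (F (sphereReflection u x))
    else min (F x) (F (sphereReflection u x))
  continuous_toFun := by
    refine Continuous.if_le (by fun_prop) (by fun_prop) (by fun_prop) (by fun_prop) fun x hx => ?_
    simp [sphereReflection_eq_self hx.symm]

lemma polarization_of_nonneg {u : E} {x : 𝕊} (h : 0 ≤ ⟪u, (x : E)⟫) (F : C(𝕊, ℝ)) :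
    polarization u F x = max (F x) (F (sphereReflection u x)) :=
  if_pos h

lemma polarization_of_nonpos {u : E} {x : 𝕊} (h : ⟪u, (x : E)⟫ ≤ 0) (F : C(𝕊, ℝ)) :
    polarization u F x = min (F x) (F (sphereReflection u x)) := by
  rcases h.lt_or_eq with h | h
  · exact if_neg h.not_ge
  · rw [polarization_of_nonneg h.ge, sphereReflection_eq_self h, max_self, min_self]

lemma comp_polarization_add {V : Type*} [AddCommMonoid V] (φ : ℝ → V) (u : E) (F : C(𝕊, ℝ))
    (x : 𝕊) :
    φ (polarization u F x) + φ (polarization u F (sphereReflection u x)) =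
      φ (F x) + φ (F (sphereReflection u x)) := by
  rcases le_total 0 ⟪u, (x : E)⟫ with h | h
  · have hσ : ⟪u, (sphereReflection u x : E)⟫ ≤ 0 := by simpa [inner_sphereReflection_self] using h
    rw [polarization_of_nonneg h, polarization_of_nonpos hσ, sphereReflection_sphereReflection,
      min_comm]
    rcases le_total (F x) (F (sphereReflection u x)) with hF | hF <;> simp [hF, add_comm]
  · have hσ : 0 ≤ ⟪u, (sphereReflection u x : E)⟫ := by simpa [inner_sphereReflection_self] using h
    rw [polarization_of_nonpos h, polarization_of_nonneg hσ, sphereReflection_sphereReflection,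
      max_comm]
    rcases le_total (F x) (F (sphereReflection u x)) with hF | hF <;> simp [hF, add_comm]

lemma reflectionGap_polarization (u : E) (F : C(𝕊, ℝ)) (x : 𝕊) :
    reflectionGap u (polarization u F) x = |reflectionGap u F x| := by
  simp only [reflectionGap, abs_mul]
  rcases le_total 0 ⟪u, (x : E)⟫ with h | h
  · have hσ : ⟪u, (sphereReflection u x : E)⟫ ≤ 0 := by simpa [inner_sphereReflection_self] using h
    rw [polarization_of_nonneg h, polarization_of_nonpos hσ, sphereReflection_sphereReflection,
      min_comm, max_sub_min_eq_abs', abs_of_nonneg h]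
  · have hσ : 0 ≤ ⟪u, (sphereReflection u x : E)⟫ := by simpa [inner_sphereReflection_self] using h
    rw [polarization_of_nonpos h, polarization_of_nonneg hσ, sphereReflection_sphereReflection,
      max_comm, ← neg_sub, max_sub_min_eq_abs', abs_of_nonpos h, mul_neg, neg_mul]

lemma range_polarization_subset (u : E) (F : C(𝕊, ℝ)) : range (polarization u F) ⊆ range F := by
  rintro _ ⟨x, rfl⟩
  rcases le_total 0 ⟪u, (x : E)⟫ with h | h
  · rw [polarization_of_nonneg h]
    rcases max_choice (F x) (F (sphereReflection u x)) with h' | h' <;> simp [h']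
  · rw [polarization_of_nonpos h]
    rcases min_choice (F x) (F (sphereReflection u x)) with h' | h' <;> simp [h']

lemma abs_max_sub_min_le {a b c d ε : ℝ} (hac : |a - c| ≤ ε) (had : |a - d| ≤ ε)
    (hbc : |b - c| ≤ ε) (hbd : |b - d| ≤ ε) : |max a b - min c d| ≤ ε := by
  rcases max_choice a b with h | h <;> rcases min_choice c d with h' | h' <;> rwa [h, h']

lemma modulusLE_polarization (u : E) (F : C(𝕊, ℝ)) : ModulusLE (polarization u F) F := by
  intro δ ε hF
  have same (x y : 𝕊) (hxy : dist x y ≤ δ) :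
      |F x - F y| ≤ ε ∧ |F (sphereReflection u x) - F (sphereReflection u y)| ≤ ε :=
    ⟨hF x y hxy, hF _ _ (by rwa [(sphereReflection u).dist_eq])⟩
  have opposite (x y : 𝕊) (hx : 0 ≤ ⟪u, (x : E)⟫) (hy : ⟪u, (y : E)⟫ ≤ 0) (hxy : dist x y ≤ δ) :
      |polarization u F x - polarization u F y| ≤ ε := by
    have hcross := (dist_sphereReflection_right_le (mul_nonpos_of_nonneg_of_nonpos hx hy)).trans hxy
    rw [polarization_of_nonneg hx, polarization_of_nonpos hy]
    refine abs_max_sub_min_le (same x y hxy).1 (hF _ _ hcross) ?_ (same x y hxy).2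
    simpa using (same _ _ hcross).2
  intro x y hxy
  rw [Real.dist_eq]
  rcases le_total 0 ⟪u, (x : E)⟫ with hx | hx <;> rcases le_total 0 ⟪u, (y : E)⟫ with hy | hy
  · rw [polarization_of_nonneg hx, polarization_of_nonneg hy]
    exact (abs_max_sub_max_le_max _ _ _ _).trans (max_le (same x y hxy).1 (same x y hxy).2)
  · exact opposite x y hx hy hxy
  · rw [abs_sub_comm]
    exact opposite y x hy hx (dist_comm x y ▸ hxy)
  · rw [polarization_of_nonpos hx, polarization_of_nonpos hy]
    exact (abs_min_sub_min_le_max _ _ _ _).trans (max_le (same x y hxy).1 (same x y hxy).2)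

end Polarization

section Integration

open Filter Topology
open ProbabilityTheory (IdentDistrib)

variable {α β : Type*} [MeasurableSpace α] [MeasurableSpace β]

lemma measurable_comp_of_monotoneOn_Icc {φ : ℝ → ℝ} {a b : ℝ} (hφ : MonotoneOn φ (Icc a b))
    {g : α → ℝ} (hg : Measurable g) (hgI : ∀ x, g x ∈ Icc a b) : Measurable fun x => φ (g x) := by
  have hφm : Measurable fun t : Icc a b => φ t :=
    Monotone.measurable fun s t hst => hφ s.2 t.2 hst
  exact hφm.comp (hg.subtype_mk (h := hgI))

lemma two_smul_integral_eq_integral_add_comp {V : Type*} [NormedAddCommGroup V] [NormedSpace ℝ V]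
    {μ : Measure α} {m : α → α} (hm : MeasurePreserving m μ μ) {T : α → V} (hT : Integrable T μ) :
    (2 : ℝ) • ∫ x, T x ∂μ = ∫ x, (T x + T (m x)) ∂μ := by
  have hcomp : ∫ x, T (m x) ∂μ = ∫ x, T x ∂μ := by
    rw [← integral_map hm.aemeasurable (hm.map_eq.symm ▸ hT.aestronglyMeasurable), hm.map_eq]
  rw [integral_add hT (g := fun x => T (m x)) (hm.integrable_comp_of_integrable hT), hcomp,
    two_smul]

lemma integrable_of_continuous {Y V : Type*} [TopologicalSpace Y] [CompactSpace Y]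
    [MeasurableSpace Y] [OpensMeasurableSpace Y] [NormedAddCommGroup V] {μ : Measure Y}
    [IsFiniteMeasure μ] {F : Y → V} (hF : Continuous F) : Integrable F μ :=
  hF.integrable_of_hasCompactSupport (.of_compactSpace F)

lemma continuous_integral_smul {Y V : Type*} [TopologicalSpace Y] [CompactSpace Y]
    [MeasurableSpace Y] [OpensMeasurableSpace Y] [NormedAddCommGroup V] [NormedSpace ℝ V]
    {μ : Measure Y} {w : Y → V} (hw : Integrable w μ) :
    Continuous fun H : C(Y, ℝ) => ∫ y, H y • w y ∂μ := by
  have hint (H : C(Y, ℝ)) : Integrable (fun y => H y • w y) μ :=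
    hw.bdd_smul ‖H‖ H.continuous.aestronglyMeasurable (.of_forall H.norm_coe_le_norm)
  refine (LipschitzWith.of_dist_le' (K := ∫ y, ‖w y‖ ∂μ) fun H K => ?_).continuous
  rw [dist_eq_norm, dist_eq_norm, ← integral_sub (hint H) (hint K), mul_comm, ← integral_const_mul]
  refine norm_integral_le_of_norm_le (hw.norm.const_mul _) (.of_forall fun y => ?_)
  rw [← sub_smul, norm_smul]
  gcongr
  exact (H - K).norm_coe_le_norm y

lemma identDistrib_of_forall_measure_lt_eq {μ : Measure α} {ν : Measure β} [IsFiniteMeasure μ]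
    {f : α → ℝ} {g : β → ℝ} (hf : AEMeasurable f μ) (hg : AEMeasurable g ν)
    (h : ∀ t, μ {x | t < f x} = ν {y | t < g y}) : IdentDistrib f g μ ν := by
  refine ⟨hf, hg, ?_⟩
  have := Measure.isFiniteMeasure_map μ f
  refine Measure.ext_of_generateFrom_of_iUnion _ (fun n : ℕ => Ioi (-n : ℝ))
    (borel_eq_generateFrom_Ioi ℝ ▸ BorelSpace.measurable_eq) isPiSystem_Ioi ?_
    (fun n => mem_range_self _) (fun n => measure_ne_top _ _) ?_
  · exact eq_univ_of_forall fun x => mem_iUnion.2 ((exists_nat_gt (-x)).imp fun n hn => by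
      simpa [neg_lt] using hn)
  · rintro _ ⟨t, rfl⟩
    rw [Measure.map_apply_of_aemeasurable hf measurableSet_Ioi,
      Measure.map_apply_of_aemeasurable hg measurableSet_Ioi]
    exact h t

lemma identDistrib_of_forall_integral_eq {Z : Type*} [TopologicalSpace Z] [MeasurableSpace Z]
    [BorelSpace Z] [HasOuterApproxClosed Z] {μ : Measure α} {ν : Measure β} [IsFiniteMeasure μ]
    [IsFiniteMeasure ν] {f : α → Z} {g : β → Z} (hf : AEMeasurable f μ) (hg : AEMeasurable g ν)
    (h : ∀ φ : BoundedContinuousFunction Z ℝ, ∫ x, φ (f x) ∂μ = ∫ y, φ (g y) ∂ν) :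
    IdentDistrib f g μ ν := by
  have := Measure.isFiniteMeasure_map μ f
  have := Measure.isFiniteMeasure_map ν g
  refine ⟨hf, hg, ext_of_forall_integral_eq_of_IsFiniteMeasure fun φ => ?_⟩
  rw [integral_map hf φ.continuous.aestronglyMeasurable,
    integral_map hg φ.continuous.aestronglyMeasurable, h φ]

lemma isClosed_setOf_identDistrib {Y : Type*} [TopologicalSpace Y] [CompactSpace Y]
    [MeasurableSpace Y] [OpensMeasurableSpace Y] (μ : Measure Y) [IsFiniteMeasure μ]
    (ν : Measure α) [IsFiniteMeasure ν] {f : α → ℝ} (hf : AEMeasurable f ν) :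
    IsClosed {F : C(Y, ℝ) | IdentDistrib F f μ ν} := by
  have heq : {F : C(Y, ℝ) | IdentDistrib F f μ ν} = ⋂ φ : BoundedContinuousFunction ℝ ℝ,
      {F : C(Y, ℝ) | ∫ y, φ (F y) ∂μ = ∫ x, φ (f x) ∂ν} := by
    ext F
    simp only [mem_ofPred_eq, mem_iInter]
    exact ⟨fun h φ => (h.comp φ.continuous.measurable).integral_eq,
      identDistrib_of_forall_integral_eq F.continuous.aemeasurable hf⟩
  rw [heq]
  refine isClosed_iInter fun φ => isClosed_eq ?_ continuous_const
  simpa [Function.comp_def] using (continuous_integral_smul (integrable_const (1 : ℝ))).comp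
    (ContinuousMap.continuous_postcomp (X := Y) φ.toContinuousMap)

lemma ae_eq_of_monovary_of_identDistrib {μ : Measure α} [IsFiniteMeasure μ] {F G : α → ℝ}
    (hFG : Monovary F G) (h : IdentDistrib F G μ μ) : F =ᵐ[μ] G := by
  have superlevel_ae_eq (q : ℚ) : (F ⁻¹' Ioi (q : ℝ)) =ᵐ[μ] (G ⁻¹' Ioi (q : ℝ)) := by
    have hnested : F ⁻¹' Ioi (q : ℝ) ⊆ G ⁻¹' Ioi (q : ℝ) ∨
        G ⁻¹' Ioi (q : ℝ) ⊆ F ⁻¹' Ioi (q : ℝ) := by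
      by_contra! hcon
      obtain ⟨x, hFx, hGx⟩ := not_subset.1 hcon.1
      obtain ⟨y, hGy, hFy⟩ := not_subset.1 hcon.2
      exact hFy (lt_of_lt_of_le hFx (hFG ((not_lt.1 hGx).trans_lt hGy)))
    have hmeas := h.measure_mem_eq (measurableSet_Ioi (a := (q : ℝ)))
    rcases hnested with hsub | hsub
    · exact ae_eq_of_subset_of_measure_ge hsub hmeas.ge
        (h.aemeasurable_fst.nullMeasurableSet_preimage measurableSet_Ioi) (measure_ne_top _ _)
    · exact (ae_eq_of_subset_of_measure_ge hsub hmeas.le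
        (h.aemeasurable_snd.nullMeasurableSet_preimage measurableSet_Ioi)
        (measure_ne_top _ _)).symm
  filter_upwards [ae_all_iff.2 superlevel_ae_eq] with x hx
  exact eq_of_forall_rat_lt_iff_lt fun q => (hx q).to_iff

end Integration

section Product

variable {α β : Type*} [MeasurableSpace α] [MeasurableSpace β]

/-- The sum of `T` over the four points obtained by applying `m` and `m'` or not to the two
coordinates. -/
def prodOrbitSum {V : Type*} [Add V] (m : α → α) (m' : β → β) (T : α × β → V) (z : α × β) : V :=
  T z + T (z.1, m' z.2) + (T (m z.1, z.2) + T (m z.1, m' z.2))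

variable {V : Type*} [NormedAddCommGroup V] {μ : Measure α} {ν : Measure β} [SFinite μ] [SFinite ν]
  {m : α → α} {m' : β → β} {T : α × β → V}

lemma integrable_prodOrbitSum (hm : MeasurePreserving m μ μ) (hm' : MeasurePreserving m' ν ν)
    (hT : Integrable T (μ.prod ν)) : Integrable (prodOrbitSum m m' T) (μ.prod ν) := by
  have hT' := hT.add (((MeasurePreserving.id μ).prod hm').integrable_comp_of_integrable hT)
  exact hT'.add ((hm.prod (.id ν)).integrable_comp_of_integrable hT')

lemma four_smul_integral_eq_integral_prodOrbitSum [NormedSpace ℝ V]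
    (hm : MeasurePreserving m μ μ) (hm' : MeasurePreserving m' ν ν)
    (hT : Integrable T (μ.prod ν)) :
    (4 : ℝ) • ∫ z, T z ∂μ.prod ν = ∫ z, prodOrbitSum m m' T z ∂μ.prod ν := by
  have hsnd := (MeasurePreserving.id μ).prod hm'
  have hT' := hT.add (hsnd.integrable_comp_of_integrable hT)
  rw [show (4 : ℝ) = 2 * 2 by norm_num, mul_smul, two_smul_integral_eq_integral_add_comp hsnd hT]
  exact two_smul_integral_eq_integral_add_comp (hm.prod (.id ν)) hT'

end Product

section RieszForm

variable {E : Type*} [NormedAddCommGroup E] [InnerProductSpace ℝ E]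

local notation "𝕊" => sphere (0 : E) 1

lemma abs_kernel_le {k : ℝ → ℝ} (hk : MonotoneOn k (Icc (-1) 1)) (x y : 𝕊) :
    |k ⟪(x : E), (y : E)⟫| ≤ max |k (-1)| |k 1| := by
  have h := inner_mem_Icc_of_mem_sphere x y
  exact abs_le_max_abs_abs (hk (by simp) h h.1) (hk h (by simp) h.2)

/-- Twice the slope of the kernel `k` between `⟪x, σ y⟫` and `⟪x, y⟫`, normalised by `‖u‖²`, where
`σ` is the reflection along `u`. -/
def kernelWeight (k : ℝ → ℝ) (u : E) (x y : 𝕊) : ℝ :=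
  2 * slope k ⟪(x : E), (sphereReflection u y : E)⟫ ⟪(x : E), (y : E)⟫ / ⟪u, u⟫

lemma kernelWeight_nonneg {k : ℝ → ℝ} (hk : MonotoneOn k (Icc (-1) 1)) (u : E) (x y : 𝕊) :
    0 ≤ kernelWeight k u x y :=
  div_nonneg (mul_nonneg zero_le_two (hk.slope_nonneg (inner_mem_Icc_of_mem_sphere _ _)
    (inner_mem_Icc_of_mem_sphere _ _))) real_inner_self_nonneg

lemma inner_sub_inner_sphereReflection_right (u : E) (x y : 𝕊) :
    ⟪(x : E), (y : E)⟫ - ⟪(x : E), (sphereReflection u y : E)⟫ =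
      2 * (⟪u, (x : E)⟫ * ⟪u, (y : E)⟫) / ⟪u, u⟫ := by
  rw [inner_sphereReflection_right, real_inner_comm u (x : E)]
  ring

lemma kernelWeight_pos {k : ℝ → ℝ} (hk : StrictMonoOn k (Icc (-1) 1)) {u : E} {x y : 𝕊}
    (h : ⟪u, (x : E)⟫ * ⟪u, (y : E)⟫ ≠ 0) : 0 < kernelWeight k u x y := by
  have hu : 0 < ⟪u, u⟫ := real_inner_self_pos.2 <| by rintro rfl; simp at h
  have hne : ⟪(x : E), (sphereReflection u y : E)⟫ ≠ ⟪(x : E), (y : E)⟫ := by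
    rw [ne_comm, ← sub_ne_zero, inner_sub_inner_sphereReflection_right]
    exact div_ne_zero (mul_ne_zero two_ne_zero h) hu.ne'
  exact div_pos (mul_pos two_pos (hk.slope_pos (inner_mem_Icc_of_mem_sphere _ _)
    (inner_mem_Icc_of_mem_sphere _ _) hne)) hu

lemma kernel_sub_mul_eq_kernelWeight_mul (k : ℝ → ℝ) (u : E) (F G : 𝕊 → ℝ) (x y : 𝕊) :
    (k ⟪(x : E), (y : E)⟫ - k ⟪(x : E), (sphereReflection u y : E)⟫) *
        ((F x - F (sphereReflection u x)) * (G y - G (sphereReflection u y))) =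
      kernelWeight k u x y * (reflectionGap u F x * reflectionGap u G y) := by
  rw [← vsub_eq_sub (k _), ← sub_smul_slope k, inner_sub_inner_sphereReflection_right, smul_eq_mul,
    kernelWeight, reflectionGap, reflectionGap]
  ring

/-- Twice the sum, over the four points `(x, y)`, `(x, σ y)`, `(σ x, y)`, `(σ x, σ y)`, of the
change of the integrand `k(x · y) F(x) G(y)` when `F` and `G` are polarized along `u`
(`prodOrbitSum_polarizationIncrement`). -/
def rieszGain (k : ℝ → ℝ) (u : E) (F G : 𝕊 → ℝ) (z : 𝕊 × 𝕊) : ℝ :=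
  kernelWeight k u z.1 z.2 * (|reflectionGap u F z.1 * reflectionGap u G z.2| -
    reflectionGap u F z.1 * reflectionGap u G z.2)

lemma rieszGain_nonneg {k : ℝ → ℝ} (hk : MonotoneOn k (Icc (-1) 1)) (u : E) (F G : 𝕊 → ℝ) :
    0 ≤ rieszGain k u F G := fun z =>
  mul_nonneg (kernelWeight_nonneg hk u z.1 z.2) (sub_nonneg.2 (le_abs_self _))

lemma reflectionGap_mul_nonneg_of_rieszGain_eq_zero {k : ℝ → ℝ} (hk : StrictMonoOn k (Icc (-1) 1))
    {u : E} {F G : 𝕊 → ℝ} {z : 𝕊 × 𝕊} (h : rieszGain k u F G z = 0) :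
    0 ≤ reflectionGap u F z.1 * reflectionGap u G z.2 := by
  by_cases hz : ⟪u, (z.1 : E)⟫ * ⟪u, (z.2 : E)⟫ = 0
  · rw [reflectionGap, reflectionGap, mul_mul_mul_comm, hz, zero_mul]
  · rw [← abs_eq_self]
    exact sub_eq_zero.1 ((mul_eq_zero.1 h).resolve_left (kernelWeight_pos hk hz).ne')

/-- The change of the integrand of the Riesz form under polarization along `u`. -/
def polarizationIncrement (k : ℝ → ℝ) (u : E) (F G : C(𝕊, ℝ)) (z : 𝕊 × 𝕊) : ℝ :=
  k ⟪(z.1 : E), (z.2 : E)⟫ * (polarization u F z.1 * polarization u G z.2) -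
    k ⟪(z.1 : E), (z.2 : E)⟫ * (F z.1 * G z.2)

/- Polarization preserves the sum of the values at two mirror points and only changes the sign of
their difference, so that only the differences contribute, with the difference of the kernel values
as a factor. -/
lemma prodOrbitSum_polarizationIncrement (k : ℝ → ℝ) (u : E) (F G : C(𝕊, ℝ)) (z : 𝕊 × 𝕊) :
    prodOrbitSum (sphereReflection u) (sphereReflection u) (polarizationIncrement k u F G) z =
      rieszGain k u F G z / 2 := by
  have hF := comp_polarization_add id u F z.1
  have hG := comp_polarization_add id u G z.2
  have hPFG := kernel_sub_mul_eq_kernelWeight_mul k u (polarization u F) (polarization u G) z.1 z.2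
  have hFG := kernel_sub_mul_eq_kernelWeight_mul k u F G z.1 z.2
  rw [reflectionGap_polarization, reflectionGap_polarization, ← abs_mul] at hPFG
  rw [rieszGain, mul_sub, ← hPFG, ← hFG]
  simp only [id] at hF hG
  simp only [prodOrbitSum, polarizationIncrement, inner_sphereReflection_left,
    sphereReflection_sphereReflection]
  rw [← eq_sub_iff_add_eq'] at hF hG
  rw [hF, hG]
  ring

variable [MeasurableSpace E]

/-- The bilinear form `(F, G) ↦ ∫∫ k(x · y) F(x) G(y)` on functions on the unit sphere. -/
def rieszForm (ν : Measure 𝕊) (k : ℝ → ℝ) (F G : 𝕊 → ℝ) : ℝ :=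
  ∫ z, k ⟪(z.1 : E), (z.2 : E)⟫ * (F z.1 * G z.2) ∂ν.prod ν

variable {ν : Measure (sphere (0 : E) 1)} {k : ℝ → ℝ} {u : E}

lemma rieszForm_congr {F F' G G' : 𝕊 → ℝ} (hF : F =ᵐ[ν] F') (hG : G =ᵐ[ν] G') :
    rieszForm ν k F G = rieszForm ν k F' G' := by
  refine integral_congr_ae ?_
  filter_upwards [Measure.quasiMeasurePreserving_fst.ae hF,
    Measure.quasiMeasurePreserving_snd.ae hG] with z hFz hGz
  rw [hFz, hGz]

variable [BorelSpace E] [FiniteDimensional ℝ E]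

lemma measurable_kernel (hk : MonotoneOn k (Icc (-1) 1)) :
    Measurable fun z : 𝕊 × 𝕊 => k ⟪(z.1 : E), (z.2 : E)⟫ :=
  measurable_comp_of_monotoneOn_Icc hk
    (by fun_prop : Continuous fun z : 𝕊 × 𝕊 => ⟪(z.1 : E), (z.2 : E)⟫).measurable
    fun z => inner_mem_Icc_of_mem_sphere z.1 z.2

lemma integrable_kernel_mul (hk : MonotoneOn k (Icc (-1) 1)) {F G : 𝕊 → ℝ}
    (hF : Integrable F ν) (hG : Integrable G ν) :
    Integrable (fun z : 𝕊 × 𝕊 => k ⟪(z.1 : E), (z.2 : E)⟫ * (F z.1 * G z.2)) (ν.prod ν) :=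
  (hF.mul_prod hG).bdd_mul (measurable_kernel hk).aestronglyMeasurable
    (.of_forall fun z => abs_kernel_le hk z.1 z.2)

variable [IsFiniteMeasure ν]

lemma continuous_rieszForm (hk : MonotoneOn k (Icc (-1) 1)) :
    Continuous fun P : C(𝕊, ℝ) × C(𝕊, ℝ) => rieszForm ν k P.1 P.2 := by
  have hkernel : Integrable (fun z : 𝕊 × 𝕊 => k ⟪(z.1 : E), (z.2 : E)⟫) (ν.prod ν) :=
    .of_bound (measurable_kernel hk).aestronglyMeasurable _
      (.of_forall fun z => abs_kernel_le hk z.1 z.2)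
  have htensor : Continuous fun P : C(𝕊, ℝ) × C(𝕊, ℝ) =>
      P.1.comp ContinuousMap.fst * P.2.comp ContinuousMap.snd := by
    fun_prop
  convert (continuous_integral_smul hkernel).comp htensor using 2 with P
  simp [rieszForm, mul_comm]

lemma integrable_kernel_mul_continuousMap (hk : MonotoneOn k (Icc (-1) 1)) (F G : C(𝕊, ℝ)) :
    Integrable (fun z : 𝕊 × 𝕊 => k ⟪(z.1 : E), (z.2 : E)⟫ * (F z.1 * G z.2)) (ν.prod ν) :=
  integrable_kernel_mul hk (integrable_of_continuous F.continuous)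
    (integrable_of_continuous G.continuous)

lemma integrable_polarizationIncrement (hk : MonotoneOn k (Icc (-1) 1)) (u : E) (F G : C(𝕊, ℝ)) :
    Integrable (polarizationIncrement k u F G) (ν.prod ν) :=
  (integrable_kernel_mul_continuousMap hk _ _).sub (integrable_kernel_mul_continuousMap hk F G)

lemma integrable_rieszGain (hk : MonotoneOn k (Icc (-1) 1))
    (hν : MeasurePreserving (sphereReflection u) ν ν) (F G : C(𝕊, ℝ)) :
    Integrable (rieszGain k u F G) (ν.prod ν) := by
  refine ((integrable_prodOrbitSum hν hν
    (integrable_polarizationIncrement hk u F G)).const_mul 2).congr (.of_forall fun z => ?_)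
  simp only [prodOrbitSum_polarizationIncrement, mul_div_cancel₀ _ (two_ne_zero' ℝ)]

lemma rieszForm_polarization_sub (hk : MonotoneOn k (Icc (-1) 1))
    (hν : MeasurePreserving (sphereReflection u) ν ν) (F G : C(𝕊, ℝ)) :
    rieszForm ν k (polarization u F) (polarization u G) - rieszForm ν k F G =
      (∫ z, rieszGain k u F G z ∂ν.prod ν) / 8 := by
  have hsub : rieszForm ν k (polarization u F) (polarization u G) - rieszForm ν k F G =
      ∫ z, polarizationIncrement k u F G z ∂ν.prod ν :=
    (integral_sub (integrable_kernel_mul_continuousMap hk _ _)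
      (integrable_kernel_mul_continuousMap hk F G)).symm
  have horbit := four_smul_integral_eq_integral_prodOrbitSum hν hν
    (integrable_polarizationIncrement hk u F G)
  simp only [prodOrbitSum_polarizationIncrement, integral_div, smul_eq_mul] at horbit
  linarith

lemma rieszForm_le_polarization (hk : MonotoneOn k (Icc (-1) 1))
    (hν : MeasurePreserving (sphereReflection u) ν ν) (F G : C(𝕊, ℝ)) :
    rieszForm ν k F G ≤ rieszForm ν k (polarization u F) (polarization u G) := by
  rw [← sub_nonneg, rieszForm_polarization_sub hk hν]
  exact div_nonneg (integral_nonneg (rieszGain_nonneg hk u F G)) (by norm_num)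

lemma reflectionGap_mul_nonneg_of_rieszForm_polarization_le [ν.IsOpenPosMeasure]
    (hk : StrictMonoOn k (Icc (-1) 1)) (hν : MeasurePreserving (sphereReflection u) ν ν)
    {F G : C(𝕊, ℝ)}
    (h : rieszForm ν k (polarization u F) (polarization u G) ≤ rieszForm ν k F G) (x y : 𝕊) :
    0 ≤ reflectionGap u F x * reflectionGap u G y := by
  have hgain : rieszGain k u F G =ᵐ[ν.prod ν] 0 := by
    refine (integral_eq_zero_iff_of_nonneg (rieszGain_nonneg hk.monotoneOn u F G)
      (integrable_rieszGain hk.monotoneOn hν F G)).1 (le_antisymm ?_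
        (integral_nonneg (rieszGain_nonneg hk.monotoneOn u F G)))
    have := rieszForm_polarization_sub hk.monotoneOn hν F G
    linarith
  have hdense : Dense {z : 𝕊 × 𝕊 | 0 ≤ reflectionGap u F z.1 * reflectionGap u G z.2} :=
    Measure.dense_of_ae (hgain.mono fun z => reflectionGap_mul_nonneg_of_rieszGain_eq_zero hk)
  have hclosed : IsClosed {z : 𝕊 × 𝕊 | 0 ≤ reflectionGap u F z.1 * reflectionGap u G z.2} :=
    isClosed_le continuous_const (by fun_prop)
  exact hclosed.closure_subset (hdense (x, y))

end RieszForm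

section FirstMoment

variable {E : Type*} [NormedAddCommGroup E] [InnerProductSpace ℝ E] [MeasurableSpace E]

local notation "𝕊" => sphere (0 : E) 1

/-- The first moment `∫ F(x) x` of a function on the unit sphere, which points towards its pole if
the function is symmetric decreasing. -/
def firstMoment (ν : Measure 𝕊) (F : 𝕊 → ℝ) : E :=
  ∫ x, F x • (x : E) ∂ν

variable [BorelSpace E] [FiniteDimensional ℝ E] {ν : Measure (sphere (0 : E) 1)}
  [IsFiniteMeasure ν] {u p : E}

lemma continuous_firstMoment : Continuous fun F : C(𝕊, ℝ) => firstMoment ν F :=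
  continuous_integral_smul (integrable_of_continuous continuous_subtype_val)

lemma two_mul_inner_firstMoment (hν : MeasurePreserving (sphereReflection u) ν ν) {F : 𝕊 → ℝ}
    (hF : Continuous F) : 2 * ⟪u, firstMoment ν F⟫ = ∫ x, reflectionGap u F x ∂ν := by
  rw [firstMoment, ← integral_inner (integrable_of_continuous (by fun_prop)), ← smul_eq_mul,
    two_smul_integral_eq_integral_add_comp hν (integrable_of_continuous (by fun_prop))]
  refine integral_congr_ae (.of_forall fun x => ?_)
  simp only [inner_smul_right, inner_sphereReflection_self, reflectionGap]
  ring

lemma IsPolarized.inner_firstMoment_nonneg (hν : MeasurePreserving (sphereReflection u) ν ν)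
    {F : 𝕊 → ℝ} (hF : Continuous F) (h : IsPolarized u F) : 0 ≤ ⟪u, firstMoment ν F⟫ := by
  have hnonneg : 0 ≤ ∫ x, reflectionGap u F x ∂ν := integral_nonneg h
  rw [← two_mul_inner_firstMoment hν hF] at hnonneg
  exact nonneg_of_mul_nonneg_right hnonneg two_pos

lemma firstMoment_polarization_sub (hν : MeasurePreserving (sphereReflection u) ν ν)
    (F : C(𝕊, ℝ)) :
    firstMoment ν (polarization u F) - firstMoment ν F =
      ((∫ x, (|reflectionGap u F x| - reflectionGap u F x) ∂ν) / (2 * ⟪u, u⟫)) • u := by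
  have horbit (x : 𝕊) : (polarization u F x - F x) • (x : E) +
      (polarization u F (sphereReflection u x) - F (sphereReflection u x)) •
        (sphereReflection u x : E) =
      ((|reflectionGap u F x| - reflectionGap u F x) / ⟪u, u⟫) • u := by
    have hneg : polarization u F (sphereReflection u x) - F (sphereReflection u x) =
        -(polarization u F x - F x) := by
      have hadd := comp_polarization_add id u F x
      simp only [id] at hadd
      linarith
    rw [hneg, ← reflectionGap_polarization, reflectionGap, reflectionGap, ← mul_sub,
      sub_sub_sub_comm, hneg, coe_sphereReflection]
    module
  rw [firstMoment, firstMoment, ← integral_sub (integrable_of_continuous (by fun_prop))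
    (integrable_of_continuous (by fun_prop)), ← smul_right_inj (two_ne_zero' ℝ),
    two_smul_integral_eq_integral_add_comp hν (integrable_of_continuous (by fun_prop))]
  simp only [← sub_smul, horbit, integral_smul_const, integral_div, smul_smul]
  congr 1
  ring

lemma inner_firstMoment_le_polarization (hup : 0 ≤ ⟪u, p⟫)
    (hν : MeasurePreserving (sphereReflection u) ν ν) (F : C(𝕊, ℝ)) :
    ⟪firstMoment ν F, p⟫ ≤ ⟪firstMoment ν (polarization u F), p⟫ := by
  rw [← sub_nonneg, ← inner_sub_left, firstMoment_polarization_sub hν, real_inner_smul_left]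
  exact mul_nonneg (div_nonneg (integral_nonneg fun x => sub_nonneg.2 (le_abs_self _))
    (mul_nonneg zero_le_two real_inner_self_nonneg)) hup

variable [ν.IsOpenPosMeasure]

lemma isPolarized_of_inner_firstMoment_polarization_le (hup : 0 < ⟪u, p⟫)
    (hν : MeasurePreserving (sphereReflection u) ν ν) {F : C(𝕊, ℝ)}
    (h : ⟪firstMoment ν (polarization u F), p⟫ ≤ ⟪firstMoment ν F, p⟫) : IsPolarized u F := by
  intro x
  by_contra! hx
  have hcont : Continuous fun x => |reflectionGap u F x| - reflectionGap u F x := by fun_prop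
  have hpos : 0 < ∫ x, (|reflectionGap u F x| - reflectionGap u F x) ∂ν :=
    hcont.integral_pos_of_hasCompactSupport_nonneg_nonzero (x := x) (.of_compactSpace _)
      (fun x => sub_nonneg.2 (le_abs_self _)) (sub_pos.2 (hx.trans (abs_pos_of_neg hx))).ne'
  have hu : 0 < 2 * ⟪u, u⟫ :=
    mul_pos two_pos (real_inner_self_pos.2 <| by rintro rfl; simp at hup)
  rw [← sub_nonpos, ← inner_sub_left, firstMoment_polarization_sub hν, real_inner_smul_left] at h
  exact h.not_gt (mul_pos (div_pos hpos hu) hup)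

lemma IsPolarized.inner_firstMoment_pos (hν : MeasurePreserving (sphereReflection u) ν ν)
    {F : 𝕊 → ℝ} (hF : Continuous F) (h : IsPolarized u F) (hne : ∃ x, reflectionGap u F x ≠ 0) :
    0 < ⟪u, firstMoment ν F⟫ := by
  obtain ⟨x, hx⟩ := hne
  have hpos : 0 < ∫ x, reflectionGap u F x ∂ν :=
    (continuous_reflectionGap u hF).integral_pos_of_hasCompactSupport_nonneg_nonzero
      (.of_compactSpace _) h hx
  rw [← two_mul_inner_firstMoment hν hF] at hpos
  exact pos_of_mul_pos_right hpos zero_le_two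

end FirstMoment

section RieszInequality

open ProbabilityTheory (IdentDistrib)

variable {E : Type*} [NormedAddCommGroup E] [MeasurableSpace E]

local notation "𝕊" => sphere (0 : E) 1

/-- The continuous functions equidistributed with `f` that take only values of `f` and have at
least its regularity. By Arzelà–Ascoli this is a compact class in which polarized functions can be
found by maximization. -/
def rearrangementClass (ν : Measure 𝕊) (f : C(𝕊, ℝ)) : Set C(𝕊, ℝ) :=
  {F | (range F ⊆ range f ∧ ModulusLE F f) ∧ IdentDistrib F f ν ν}

variable [BorelSpace E] {ν : Measure (sphere (0 : E) 1)}

lemma self_mem_rearrangementClass (f : C(𝕊, ℝ)) : f ∈ rearrangementClass ν f :=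
  ⟨⟨Subset.rfl, .refl f⟩, .refl f.continuous.aemeasurable⟩

variable [InnerProductSpace ℝ E] [FiniteDimensional ℝ E] [IsFiniteMeasure ν]

lemma isCompact_rearrangementClass (f : C(𝕊, ℝ)) : IsCompact (rearrangementClass ν f) :=
  (isCompact_setOf_range_subset_modulusLE f.continuous (isCompact_range f.continuous)
    (isCompact_range f.continuous).isClosed).inter_right
      (isClosed_setOf_identDistrib ν ν f.continuous.aemeasurable)

lemma identDistrib_polarization {u : E} (hν : MeasurePreserving (sphereReflection u) ν ν)
    (F : C(𝕊, ℝ)) : IdentDistrib (polarization u F) F ν ν := by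
  refine identDistrib_of_forall_integral_eq (map_continuous _).aemeasurable
    F.continuous.aemeasurable fun φ => ?_
  rw [← smul_right_inj (two_ne_zero' ℝ),
    two_smul_integral_eq_integral_add_comp hν (integrable_of_continuous (by fun_prop)),
    two_smul_integral_eq_integral_add_comp hν (integrable_of_continuous (by fun_prop))]
  simp only [comp_polarization_add φ u F]

lemma polarization_mem_rearrangementClass {u : E}
    (hν : MeasurePreserving (sphereReflection u) ν ν) {f F : C(𝕊, ℝ)}
    (hF : F ∈ rearrangementClass ν f) : polarization u F ∈ rearrangementClass ν f :=
  ⟨⟨(range_polarization_subset u F).trans hF.1.1, (modulusLE_polarization u F).trans hF.1.2⟩,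
    (identDistrib_polarization hν F).trans hF.2⟩

variable [ν.IsOpenPosMeasure] {k : ℝ → ℝ} {p : E}

/- Polarizing along directions in the half space of `p` increases the Riesz form, and increases
`⟪firstMoment ν F + firstMoment ν G, p⟫` strictly unless the pair is polarized already. A pair
maximizing the latter is therefore polarized along all these directions. -/
lemma exists_isSymmDecreasing_rieszForm_le
    (hν : ∀ u : E, MeasurePreserving (sphereReflection u) ν ν)
    (hk : MonotoneOn k (Icc (-1) 1)) (hp : p ≠ 0) (f g : C(𝕊, ℝ)) :
    ∃ F ∈ rearrangementClass ν f, ∃ G ∈ rearrangementClass ν g,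
      IsSymmDecreasing p F ∧ IsSymmDecreasing p G ∧ rieszForm ν k f g ≤ rieszForm ν k F G := by
  let K := (rearrangementClass ν f ×ˢ rearrangementClass ν g) ∩
    {P | rieszForm ν k f g ≤ rieszForm ν k P.1 P.2}
  have hK : IsCompact K :=
    ((isCompact_rearrangementClass f).prod (isCompact_rearrangementClass g)).inter_right
      (isClosed_le continuous_const (continuous_rieszForm hk))
  have hne : K.Nonempty :=
    ⟨(f, g), ⟨self_mem_rearrangementClass f, self_mem_rearrangementClass g⟩,
      le_refl (rieszForm ν k f g)⟩
  have hcont : Continuous fun P : C(𝕊, ℝ) × C(𝕊, ℝ) =>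
      ⟪firstMoment ν P.1, p⟫ + ⟪firstMoment ν P.2, p⟫ :=
    ((continuous_firstMoment.comp continuous_fst).inner continuous_const).add
      ((continuous_firstMoment.comp continuous_snd).inner continuous_const)
  obtain ⟨⟨F, G⟩, ⟨⟨hF, hG⟩, hle⟩, hmax⟩ := hK.exists_isMaxOn hne hcont.continuousOn
  have hpol (u : E) (hu : 0 < ⟪u, p⟫) : IsPolarized u F ∧ IsPolarized u G := by
    have hmem : (polarization u F, polarization u G) ∈ K :=
      ⟨⟨polarization_mem_rearrangementClass (hν u) hF,
        polarization_mem_rearrangementClass (hν u) hG⟩,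
        le_trans hle (rieszForm_le_polarization hk (hν u) F G)⟩
    have hsum : ⟪firstMoment ν (polarization u F), p⟫ + ⟪firstMoment ν (polarization u G), p⟫ ≤
        ⟪firstMoment ν F, p⟫ + ⟪firstMoment ν G, p⟫ := hmax hmem
    have hFle := inner_firstMoment_le_polarization hu.le (hν u) F
    have hGle := inner_firstMoment_le_polarization hu.le (hν u) G
    exact ⟨isPolarized_of_inner_firstMoment_polarization_le hu (hν u) (by linarith),
      isPolarized_of_inner_firstMoment_polarization_le hu (hν u) (by linarith)⟩
  exact ⟨F, hF, G, hG, isSymmDecreasing_of_isPolarized F.continuous hp fun u hu => (hpol u hu).1,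
    isSymmDecreasing_of_isPolarized G.continuous hp fun u hu => (hpol u hu).2, hle⟩

theorem rieszForm_le_of_isSymmDecreasing
    (hν : ∀ u : E, MeasurePreserving (sphereReflection u) ν ν)
    (hk : MonotoneOn k (Icc (-1) 1)) (hp : p ≠ 0) {f g : C(𝕊, ℝ)} {fs gs : 𝕊 → ℝ}
    (hfs : IsSymmDecreasing p fs) (hgs : IsSymmDecreasing p gs)
    (hffs : IdentDistrib f fs ν ν) (hggs : IdentDistrib g gs ν ν) :
    rieszForm ν k f g ≤ rieszForm ν k fs gs := by
  obtain ⟨F, hF, G, hG, hFsymm, hGsymm, hle⟩ := exists_isSymmDecreasing_rieszForm_le hν hk hp f g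
  exact hle.trans_eq <| rieszForm_congr
    (ae_eq_of_monovary_of_identDistrib (hFsymm.monovary hfs) (hF.2.trans hffs))
    (ae_eq_of_monovary_of_identDistrib (hGsymm.monovary hgs) (hG.2.trans hggs))

end RieszInequality

section Rigidity

open Filter Topology

variable {E : Type*} [NormedAddCommGroup E] [InnerProductSpace ℝ E]

local notation "𝕊" => sphere (0 : E) 1

lemma reflectionGap_eq_zero_iff {u : E} {F : 𝕊 → ℝ} {x : 𝕊} :
    reflectionGap u F x = 0 ↔ F (sphereReflection u x) = F x := by
  rw [reflectionGap, mul_eq_zero, sub_eq_zero, eq_comm (a := F x), or_iff_right_iff_imp]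
  exact fun h => by rw [sphereReflection_eq_self h]

/-- The directions `u` such that `F` is not invariant under the reflection along `u`. -/
def movingDirections (F : 𝕊 → ℝ) : Set E :=
  {u | ∃ x, reflectionGap u F x ≠ 0}

lemma isOpen_movingDirections {F : 𝕊 → ℝ} (hF : Continuous F) : IsOpen (movingDirections F) := by
  rw [isOpen_iff_eventually]
  rintro u ⟨x, hx⟩
  have hu : u ≠ 0 := by rintro rfl; simp [reflectionGap] at hx
  filter_upwards [(continuousAt_reflectionGap_left hF x hu).eventually_ne hx] with v hv
  exact ⟨x, hv⟩

lemma apply_sphereReflection_of_notMem_movingDirections {F : 𝕊 → ℝ} {u : E}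
    (hu : u ∉ movingDirections F) (x : 𝕊) : F (sphereReflection u x) = F x :=
  reflectionGap_eq_zero_iff.1 (not_not.1 fun h => hu ⟨x, h⟩)

/- With `z` the mirror point of `x`, the direction `z - x` is a multiple of `u`. For `y` close to
`x` the direction `z - y` is close to it, and the reflection along `z - y` maps `z` to `y`. -/
lemma eventually_eq_of_eventually_notMem_movingDirections {F : 𝕊 → ℝ} {u : E}
    (h : ∀ᶠ v in 𝓝 u, v ∉ movingDirections F) {x : 𝕊} (hx : ⟪u, (x : E)⟫ ≠ 0) :
    ∀ᶠ y in 𝓝 x, F y = F x := by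
  have huu : ⟪u, u⟫ ≠ 0 := inner_self_ne_zero.2 <| by rintro rfl; simp at hx
  set z := sphereReflection u x with hz
  set c : ℝ := -(2 * (⟪u, (x : E)⟫ / ⟪u, u⟫)) with hc
  have hc0 : c ≠ 0 := neg_ne_zero.2 (mul_ne_zero two_ne_zero (div_ne_zero hx huu))
  have hzx : (z : E) - x = c • u := by
    rw [hz, coe_sphereReflection, hc]
    module
  have htendsto : Tendsto (fun y : 𝕊 => c⁻¹ • ((z : E) - y)) (𝓝 x) (𝓝 u) := by
    refine Continuous.tendsto' (by fun_prop) _ _ ?_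
    rw [hzx, inv_smul_smul₀ hc0]
  filter_upwards [htendsto.eventually h] with y hy
  have hFy := apply_sphereReflection_of_notMem_movingDirections hy z
  rw [sphereReflection_smul (inv_ne_zero hc0), sphereReflection_sub] at hFy
  rw [hFy, apply_sphereReflection_of_notMem_movingDirections h.self_of_nhds]

lemma isLocallyConstant_of_eventually_notMem_movingDirections {F : 𝕊 → ℝ} {u : E}
    (h : ∀ᶠ v in 𝓝 u, v ∉ movingDirections F) : IsLocallyConstant F := by
  refine (IsLocallyConstant.iff_eventually_eq F).2 fun x => ?_
  have htendsto : Tendsto (fun ε : ℝ => u + ε • (x : E)) (𝓝 0) (𝓝 u) :=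
    Continuous.tendsto' (by fun_prop) _ _ (by simp)
  have hinner (ε : ℝ) : ⟪u + ε • (x : E), (x : E)⟫ = ⟪u, (x : E)⟫ + ε := by
    simp [inner_add_left, real_inner_smul_left]
  have hne : ∃ᶠ ε in 𝓝 (0 : ℝ), ⟪u, (x : E)⟫ + ε ≠ 0 :=
    (mem_closure_iff_frequently.1 (dense_compl_singleton (-⟪u, (x : E)⟫) 0)).mono fun ε hε =>
      fun h0 => hε (eq_neg_of_add_eq_zero_right h0)
  obtain ⟨ε, hε, hv⟩ := (hne.and_eventually (htendsto.eventually h.eventually_nhds)).exists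
  exact eventually_eq_of_eventually_notMem_movingDirections hv (by rwa [hinner])

lemma sphereReflection_eq_of_rank_le_one (hE : Module.rank ℝ E ≤ 1) {u : E} (hu : u ≠ 0)
    {x y : 𝕊} (hxy : x ≠ y) : sphereReflection u x = y := by
  obtain ⟨v, hv⟩ := rank_le_one_iff.1 hE
  obtain ⟨a, rfl⟩ := hv u
  obtain ⟨b, hb⟩ := hv ((x : E) - y)
  have ha : a ≠ 0 := left_ne_zero_of_smul hu
  have hb0 : b ≠ 0 := by
    rintro rfl
    rw [zero_smul, eq_comm, sub_eq_zero] at hb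
    exact hxy (Subtype.ext hb)
  rw [sphereReflection_smul ha, ← sphereReflection_smul hb0, hb, sphereReflection_sub]

lemma eq_of_eventually_notMem_movingDirections {F : 𝕊 → ℝ} {u : E} (hu : u ≠ 0)
    (h : ∀ᶠ v in 𝓝 u, v ∉ movingDirections F) (x y : 𝕊) : F x = F y := by
  rcases le_or_gt (Module.rank ℝ E) 1 with hE | hE
  · rcases eq_or_ne x y with rfl | hxy
    · rfl
    · rw [← sphereReflection_eq_of_rank_le_one hE hu hxy,
        apply_sphereReflection_of_notMem_movingDirections h.self_of_nhds]
  · have : PreconnectedSpace 𝕊 :=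
      isPreconnected_iff_preconnectedSpace.1 (isPreconnected_sphere hE 0 1)
    exact (isLocallyConstant_of_eventually_notMem_movingDirections h).apply_eq_of_preconnectedSpace
      x y

lemma dense_movingDirections {F : 𝕊 → ℝ} (hF : ∃ x y, F x ≠ F y) :
    Dense (movingDirections F) := by
  obtain ⟨x, y, hxy⟩ := hF
  have : Nontrivial E := ⟨x, 0, ne_zero_of_mem_unit_sphere x⟩
  have hsubset : ({0}ᶜ : Set E) ⊆ closure (movingDirections F) := fun u hu =>
    mem_closure_iff_frequently.2 fun h => hxy (eq_of_eventually_notMem_movingDirections hu h x y)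
  exact dense_closure.1 ((dense_compl_singleton (0 : E)).mono hsubset)

lemma forall_nonneg_or_forall_nonpos_of_mul_nonneg {α β : Type*} {a : α → ℝ} {b : β → ℝ}
    (h : ∀ x y, 0 ≤ a x * b y) (ha : ∃ x, a x ≠ 0) (hb : ∃ y, b y ≠ 0) :
    ((∀ x, 0 ≤ a x) ∧ ∀ y, 0 ≤ b y) ∨ ((∀ x, a x ≤ 0) ∧ ∀ y, b y ≤ 0) := by
  obtain ⟨x₀, hx₀⟩ := ha
  obtain ⟨y₀, hy₀⟩ := hb
  rcases hx₀.lt_or_gt with hx₀ | hx₀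
  · have hb : ∀ y, b y ≤ 0 := fun y => nonpos_of_mul_nonneg_right (h x₀ y) hx₀
    exact .inr ⟨fun x => nonpos_of_mul_nonneg_left (h x y₀) ((hb y₀).lt_of_ne hy₀), hb⟩
  · have hb : ∀ y, 0 ≤ b y := fun y => nonneg_of_mul_nonneg_right (h x₀ y) hx₀
    exact .inl ⟨fun x => nonneg_of_mul_nonneg_left (h x y₀) ((hb y₀).lt_of_ne' hy₀), hb⟩

lemma isPolarized_or_isPolarized_neg {F G : 𝕊 → ℝ} (hF : Continuous F) (hG : Continuous G)
    (hFne : ∃ x y, F x ≠ F y) (hGne : ∃ x y, G x ≠ G y)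
    (h : ∀ u x y, 0 ≤ reflectionGap u F x * reflectionGap u G y) {u : E} (hu : u ≠ 0) :
    (IsPolarized u F ∧ IsPolarized u G) ∨ (IsPolarized (-u) F ∧ IsPolarized (-u) G) := by
  have hdense : Dense (movingDirections F ∩ movingDirections G) :=
    (dense_movingDirections hFne).inter_of_isOpen_left (dense_movingDirections hGne)
      (isOpen_movingDirections hF)
  have hmoving : ∃ᶠ v in 𝓝 u, (IsPolarized v F ∧ IsPolarized v G) ∨
      (IsPolarized (-v) F ∧ IsPolarized (-v) G) := by
    refine (mem_closure_iff_frequently.1 (hdense u)).mono fun v hv => ?_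
    simpa only [IsPolarized, reflectionGap_neg, neg_nonneg] using
      forall_nonneg_or_forall_nonpos_of_mul_nonneg (h v) hv.1 hv.2
  refine (frequently_or_distrib.1 hmoving).imp (fun hpos => ?_) fun hneg => ?_
  · exact ⟨isPolarized_of_frequently hF hu (hpos.mono fun _ => And.left),
      isPolarized_of_frequently hG hu (hpos.mono fun _ => And.right)⟩
  · have hneg' : ∃ᶠ v in 𝓝 (-u), IsPolarized v F ∧ IsPolarized v G :=
      (continuous_neg.tendsto u).frequently hneg
    exact ⟨isPolarized_of_frequently hF (neg_ne_zero.2 hu) (hneg'.mono fun _ => And.left),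
      isPolarized_of_frequently hG (neg_ne_zero.2 hu) (hneg'.mono fun _ => And.right)⟩

variable [FiniteDimensional ℝ E] [MeasurableSpace E] [BorelSpace E]
  {ν : Measure (sphere (0 : E) 1)} [IsFiniteMeasure ν] [ν.IsOpenPosMeasure]

lemma firstMoment_ne_zero (hν : ∀ u : E, MeasurePreserving (sphereReflection u) ν ν)
    {F : 𝕊 → ℝ} (hF : Continuous F) (hFne : ∃ x y, F x ≠ F y)
    (h : ∀ u ≠ 0, IsPolarized u F ∨ IsPolarized (-u) F) : firstMoment ν F ≠ 0 := by
  intro hzero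
  have ⟨x₀, _⟩ := hFne
  obtain ⟨u, x, hx⟩ := (dense_movingDirections hFne).nonempty_iff.2 ⟨(x₀ : E)⟩
  have hu : u ≠ 0 := by rintro rfl; simp [reflectionGap] at hx
  rcases h u hu with hpol | hpol
  · simpa [hzero] using hpol.inner_firstMoment_pos (hν u) hF ⟨x, hx⟩
  · simpa [hzero] using hpol.inner_firstMoment_pos (hν (-u)) hF
      ⟨x, by rwa [reflectionGap_neg, neg_ne_zero]⟩

/- Along a direction `u` with `0 < ⟪u, firstMoment ν F⟫` the function `F` can only be polarized
towards `u`, so the direction of the first moment of `F` is the pole. -/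
theorem exists_common_pole (hν : ∀ u : E, MeasurePreserving (sphereReflection u) ν ν)
    {F G : 𝕊 → ℝ} (hF : Continuous F) (hG : Continuous G)
    (hFne : ∃ x y, F x ≠ F y) (hGne : ∃ x y, G x ≠ G y)
    (h : ∀ u x y, 0 ≤ reflectionGap u F x * reflectionGap u G y) :
    ∃ p ∈ sphere (0 : E) 1, IsSymmDecreasing p F ∧ IsSymmDecreasing p G := by
  have hor {u : E} (hu : u ≠ 0) := isPolarized_or_isPolarized_neg hF hG hFne hGne h hu
  set v := firstMoment ν F with hv
  have hv0 : v ≠ 0 := firstMoment_ne_zero hν hF hFne fun u hu => (hor hu).imp And.left And.left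
  have hpol (u : E) (hu : 0 < ⟪u, v⟫) : IsPolarized u F ∧ IsPolarized u G := by
    refine (hor <| by rintro rfl; simp at hu).resolve_right fun hneg => ?_
    have hle := hneg.1.inner_firstMoment_nonneg (hν (-u)) hF
    rw [inner_neg_left, ← hv] at hle
    linarith
  have hnorm : 0 < ‖v‖⁻¹ := inv_pos.2 (norm_pos_iff.2 hv0)
  refine ⟨‖v‖⁻¹ • v, by simp [norm_smul, hv0], ?_⟩
  rw [isSymmDecreasing_smul_iff hnorm, isSymmDecreasing_smul_iff hnorm]
  exact ⟨isSymmDecreasing_of_isPolarized hF hv0 fun u hu => (hpol u hu).1,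
    isSymmDecreasing_of_isPolarized hG hv0 fun u hu => (hpol u hu).2⟩

end Rigidity

section HausdorffMeasure

open Filter Topology
open ProbabilityTheory (IdentDistrib)

variable {X Y : Type*} [MeasurableSpace X] {d : ℝ}

section Subtype

variable [EMetricSpace X] [BorelSpace X]

lemma setIntegral_hausdorffMeasure {V : Type*} [NormedAddCommGroup V] [NormedSpace ℝ V]
    {s : Set X} (hs : MeasurableSet s) (hd : 0 ≤ d) (h : X → V) :
    ∫ x in s, h x ∂μH[d] = ∫ x : s, h x ∂μH[d] := by
  rw [← (MeasurableEmbedding.subtype_coe hs).integral_map,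
    isometry_subtype_coe.map_hausdorffMeasure (.inl hd), Subtype.range_coe]

lemma hausdorffMeasure_setOf_subtype (s : Set X) (hd : 0 ≤ d) (P : X → Prop) :
    μH[d] {x : s | P x} = μH[d] {x ∈ s | P x} := by
  have h := (isometry_subtype_coe (s := s)).hausdorffMeasure_preimage (.inl hd) {x | P x}
  rwa [Subtype.range_coe, inter_comm] at h

lemma identDistrib_subtype_of_forall_hausdorffMeasure_eq {s : Set X} (hd : 0 ≤ d)
    [IsFiniteMeasure (μH[d] : Measure s)] {f g : X → ℝ} (hf : Measurable fun x : s => f x)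
    (hg : Measurable fun x : s => g x)
    (h : ∀ t, μH[d] {x ∈ s | t < f x} = μH[d] {x ∈ s | t < g x}) :
    IdentDistrib (fun x : s => f x) (fun x : s => g x) μH[d] μH[d] :=
  identDistrib_of_forall_measure_lt_eq hf.aemeasurable hg.aemeasurable fun t =>
    ((hausdorffMeasure_setOf_subtype s hd (t < f ·)).trans (h t)).trans
      (hausdorffMeasure_setOf_subtype s hd (t < g ·)).symm

end Subtype

variable [EMetricSpace X] [BorelSpace X] [EMetricSpace Y] [MeasurableSpace Y] [BorelSpace Y]
  (e : OpenPartialHomeomorph X Y) {x : X} {K : NNReal}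

lemma finiteAtFilter_hausdorffMeasure_of_lipschitzOnWith_symm (hd : 0 ≤ d)
    [IsLocallyFiniteMeasure (μH[d] : Measure Y)] (hx : x ∈ e.source) {s : Set Y}
    (hs : s ∈ 𝓝 (e x)) (hK : LipschitzOnWith K e.symm s) :
    (μH[d] : Measure X).FiniteAtFilter (𝓝 x) := by
  obtain ⟨t, ht, htfinite⟩ := (μH[d] : Measure Y).finiteAt_nhds (e x)
  refine ⟨e.symm '' (s ∩ t), ?_, ?_⟩
  · simpa only [e.left_inv hx] using e.symm.image_mem_nhds (e.map_source hx) (inter_mem hs ht)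
  · refine ((hK.mono inter_subset_left).hausdorffMeasure_image_le hd).trans_lt ?_
    exact ENNReal.mul_lt_top (ENNReal.rpow_lt_top_of_nonneg hd ENNReal.coe_ne_top)
      ((measure_mono inter_subset_right).trans_lt htfinite)

lemma hausdorffMeasure_pos_of_lipschitzOnWith (hd : 0 ≤ d)
    [(μH[d] : Measure Y).IsOpenPosMeasure] (hx : x ∈ e.source) {s U : Set X} (hs : s ∈ 𝓝 x)
    (hK : LipschitzOnWith K e s) (hU : U ∈ 𝓝 x) : 0 < μH[d] U := by
  refine pos_iff_ne_zero.2 fun hzero => ?_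
  have hpos : 0 < μH[d] (e '' (s ∩ U)) :=
    Measure.measure_pos_of_mem_nhds _ (e.image_mem_nhds hx (inter_mem hs hU))
  refine hpos.not_ge ?_
  calc μH[d] (e '' (s ∩ U)) ≤ K ^ d * μH[d] (s ∩ U) :=
        (hK.mono inter_subset_left).hausdorffMeasure_image_le hd
    _ = 0 := by rw [measure_mono_null inter_subset_right hzero, mul_zero]

end HausdorffMeasure

section SphereHausdorff

open Filter Topology Module

variable {E : Type*} [NormedAddCommGroup E] [InnerProductSpace ℝ E]

local notation "𝕊" => sphere (0 : E) 1

lemma mem_source_stereographic_neg (x : 𝕊) :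
    x ∈ (stereographic (norm_eq_of_mem_sphere (-x))).source := by
  rw [stereographic_source]
  exact ne_neg_of_mem_unit_sphere ℝ x

lemma exists_lipschitzOnWith_stereographic_neg (x : 𝕊) :
    ∃ K, ∃ s ∈ 𝓝 x, LipschitzOnWith K (stereographic (norm_eq_of_mem_sphere (-x))) s := by
  have hx : {y : E | innerSL ℝ ((-x : 𝕊) : E) y ≠ 1} ∈ 𝓝 (x : E) := by
    refine (isOpen_ne_fun (by fun_prop) continuous_const).mem_nhds ?_
    norm_num
  obtain ⟨K, s, hs, hK⟩ :=
    ((contDiffOn_stereoToFun (n := 1)).contDiffAt hx).exists_lipschitzOnWith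
  exact ⟨K, Subtype.val ⁻¹' s, continuousAt_subtype_val hs, fun y hy z hz => hK hy hz⟩

lemma exists_lipschitzOnWith_stereographic_symm (v : 𝕊) (w : (ℝ ∙ (v : E))ᗮ) :
    ∃ K, ∃ s ∈ 𝓝 w, LipschitzOnWith K (stereographic (norm_eq_of_mem_sphere v)).symm s := by
  have h : ContDiff ℝ 1 (stereoInvFunAux (v : E) ∘ ((↑) : (ℝ ∙ (v : E))ᗮ → E)) :=
    contDiff_stereoInvFunAux.comp (ℝ ∙ (v : E))ᗮ.subtypeL.contDiff
  obtain ⟨K, s, hs, hK⟩ := h.contDiffAt.exists_lipschitzOnWith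
  exact ⟨K, s, hs, fun y hy z hz => hK hy hz⟩

variable [MeasurableSpace E] [BorelSpace E] (n : ℕ) [Fact (finrank ℝ E = n + 1)]

lemma isAddHaarMeasure_hausdorffMeasure_orthogonal (v : 𝕊) :
    (μH[(n : ℝ)] : Measure (ℝ ∙ (v : E))ᗮ).IsAddHaarMeasure := by
  have : FiniteDimensional ℝ E := .of_fact_finrank_eq_succ n
  rw [← Submodule.finrank_orthogonal_span_singleton (𝕜 := ℝ) (n := n)
    (ne_zero_of_mem_unit_sphere v)]
  infer_instance

lemma isFiniteMeasure_hausdorffMeasure_sphere : IsFiniteMeasure (μH[(n : ℝ)] : Measure 𝕊) := by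
  have : FiniteDimensional ℝ E := .of_fact_finrank_eq_succ n
  have : IsLocallyFiniteMeasure (μH[(n : ℝ)] : Measure 𝕊) := by
    refine ⟨fun x => ?_⟩
    have := isAddHaarMeasure_hausdorffMeasure_orthogonal n (-x)
    obtain ⟨K, s, hs, hK⟩ := exists_lipschitzOnWith_stereographic_symm (-x) _
    exact finiteAtFilter_hausdorffMeasure_of_lipschitzOnWith_symm _ n.cast_nonneg
      (mem_source_stereographic_neg x) hs hK
  infer_instance

lemma isOpenPosMeasure_hausdorffMeasure_sphere :
    (μH[(n : ℝ)] : Measure 𝕊).IsOpenPosMeasure := by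
  have : FiniteDimensional ℝ E := .of_fact_finrank_eq_succ n
  refine ⟨fun U hU ⟨x, hx⟩ => ?_⟩
  have := isAddHaarMeasure_hausdorffMeasure_orthogonal n (-x)
  obtain ⟨K, s, hs, hK⟩ := exists_lipschitzOnWith_stereographic_neg x
  exact (hausdorffMeasure_pos_of_lipschitzOnWith _ n.cast_nonneg (mem_source_stereographic_neg x)
    hs hK (hU.mem_nhds hx)).ne'

end SphereHausdorff

section EqualityCase

open ProbabilityTheory (IdentDistrib)

variable {E : Type*} [NormedAddCommGroup E] [InnerProductSpace ℝ E]

local notation "𝕊" => sphere (0 : E) 1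

lemma isSymmDecreasing_restrict_iff {p : E} (hp : p ∈ sphere (0 : E) 1) {f : E → ℝ} :
    IsSymmDecreasing p (fun x : 𝕊 => f x) ↔
      ∃ φ : ℝ → ℝ, MonotoneOn φ (Icc (-1) 1) ∧ ∀ x ∈ sphere (0 : E) 1, f x = φ ⟪x, p⟫ := by
  rw [isSymmDecreasing_iff_exists_monotoneOn hp]
  simp only [Subtype.forall]

lemma exists_ne_of_not_forall_mem_eq {α β : Type*} [Nonempty β] {s : Set α} {f : α → β}
    (h : ¬ ∃ c, ∀ x ∈ s, f x = c) : ∃ x y : s, f x ≠ f y := by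
  contrapose! h
  rcases s.eq_empty_or_nonempty with rfl | ⟨x₀, hx₀⟩
  · simp
  · exact ⟨f x₀, fun x hx => h ⟨x, hx⟩ ⟨x₀, hx₀⟩⟩

variable [MeasurableSpace E] [BorelSpace E]

lemma IsSymmDecreasing.measurable {p : E} (hp : p ∈ sphere (0 : E) 1) {F : 𝕊 → ℝ}
    (hF : IsSymmDecreasing p F) : Measurable F := by
  obtain ⟨φ, hφ, hFφ⟩ := (isSymmDecreasing_iff_exists_monotoneOn hp).1 hF
  rw [funext hFφ]
  exact measurable_comp_of_monotoneOn_Icc hφ (Continuous.measurable (by fun_prop)) fun x =>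
    inner_mem_Icc_of_mem_sphere x ⟨p, hp⟩

variable [FiniteDimensional ℝ E] {k : ℝ → ℝ}

lemma setIntegral_setIntegral_sphere_eq_rieszForm {d : ℝ} (hd : 0 ≤ d)
    [SFinite (μH[d] : Measure 𝕊)] (hk : MonotoneOn k (Icc (-1) 1)) {f g : E → ℝ}
    (hf : Integrable (fun x : 𝕊 => f x) μH[d]) (hg : Integrable (fun x : 𝕊 => g x) μH[d]) :
    ∫ x in sphere (0 : E) 1, (∫ y in sphere (0 : E) 1, k ⟪x, y⟫ * f x * g y ∂μH[d]) ∂μH[d] =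
      rieszForm μH[d] k (fun x : 𝕊 => f x) (fun x : 𝕊 => g x) := by
  simp only [setIntegral_hausdorffMeasure isClosed_sphere.measurableSet hd]
  rw [rieszForm, integral_prod _ (integrable_kernel_mul hk hf hg)]
  simp only [mul_assoc]

/- Polarizing a pair that attains the symmetrized value cannot increase its Riesz form, by the
rearrangement inequality for the polarized pair. -/
theorem exists_common_pole_of_rieszForm_le {ν : Measure 𝕊} [IsFiniteMeasure ν]
    [ν.IsOpenPosMeasure] (hν : ∀ u : E, MeasurePreserving (sphereReflection u) ν ν)
    (hk : StrictMonoOn k (Icc (-1) 1)) {p : E} (hp : p ≠ 0) {f g fs gs : 𝕊 → ℝ}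
    (hf : Continuous f) (hg : Continuous g) (hfne : ∃ x y, f x ≠ f y) (hgne : ∃ x y, g x ≠ g y)
    (hfs : IsSymmDecreasing p fs) (hgs : IsSymmDecreasing p gs)
    (hffs : IdentDistrib f fs ν ν) (hggs : IdentDistrib g gs ν ν)
    (hle : rieszForm ν k fs gs ≤ rieszForm ν k f g) :
    ∃ q ∈ sphere (0 : E) 1, IsSymmDecreasing q f ∧ IsSymmDecreasing q g := by
  lift f to C(𝕊, ℝ) using hf
  lift g to C(𝕊, ℝ) using hg
  refine exists_common_pole hν f.continuous g.continuous hfne hgne fun u =>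
    reflectionGap_mul_nonneg_of_rieszForm_polarization_le hk (hν u) (le_trans ?_ hle)
  exact rieszForm_le_of_isSymmDecreasing hν hk.monotoneOn hp hfs hgs
    ((identDistrib_polarization (hν u) f).trans hffs)
    ((identDistrib_polarization (hν u) g).trans hggs)

end EqualityCase

theorem stmt_10_general {E : Type*} [NormedAddCommGroup E] [InnerProductSpace ℝ E]
    [MeasurableSpace E] [BorelSpace E] (n : ℕ) [Fact (Module.finrank ℝ E = n + 1)] {N : E}
    (hN : N ∈ sphere (0 : E) 1) {k : ℝ → ℝ} (hk : StrictMonoOn k (Icc (-1) 1)) {f g fs gs : E → ℝ}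
    (hf : ContinuousOn f (sphere 0 1)) (hg : ContinuousOn g (sphere 0 1))
    (hfc : ¬ ∃ c : ℝ, ∀ x ∈ sphere (0 : E) 1, f x = c)
    (hgc : ¬ ∃ c : ℝ, ∀ x ∈ sphere (0 : E) 1, g x = c)
    (hfs : (∃ φ : ℝ → ℝ, MonotoneOn φ (Icc (-1) 1) ∧ ∀ x ∈ sphere (0 : E) 1, fs x = φ ⟪x, N⟫) ∧
      ∀ t : ℝ, μH[n] {x ∈ sphere (0 : E) 1 | t < f x} = μH[n] {x ∈ sphere (0 : E) 1 | t < fs x})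
    (hgs : (∃ ψ : ℝ → ℝ, MonotoneOn ψ (Icc (-1) 1) ∧ ∀ x ∈ sphere (0 : E) 1, gs x = ψ ⟪x, N⟫) ∧
      ∀ t : ℝ, μH[n] {x ∈ sphere (0 : E) 1 | t < g x} = μH[n] {x ∈ sphere (0 : E) 1 | t < gs x})
    (hle : (∫ x in sphere (0 : E) 1, (∫ y in sphere (0 : E) 1,
          k ⟪x, y⟫ * fs x * gs y ∂μH[n]) ∂μH[n]) ≤
        ∫ x in sphere (0 : E) 1, (∫ y in sphere (0 : E) 1, k ⟪x, y⟫ * f x * g y ∂μH[n]) ∂μH[n]) :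
    ∃ p ∈ sphere (0 : E) 1,
      (∃ φ : ℝ → ℝ, MonotoneOn φ (Icc (-1) 1) ∧ ∀ x ∈ sphere (0 : E) 1, f x = φ ⟪x, p⟫) ∧
      (∃ ψ : ℝ → ℝ, MonotoneOn ψ (Icc (-1) 1) ∧ ∀ x ∈ sphere (0 : E) 1, g x = ψ ⟪x, p⟫) := by
  have : FiniteDimensional ℝ E := .of_fact_finrank_eq_succ n
  have := isFiniteMeasure_hausdorffMeasure_sphere (E := E) n
  have := isOpenPosMeasure_hausdorffMeasure_sphere (E := E) n
  have hn : (0 : ℝ) ≤ n := n.cast_nonneg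
  have hf' := hf.domRestrict
  have hg' := hg.domRestrict
  have hfsymm := (isSymmDecreasing_restrict_iff hN).2 hfs.1
  have hgsymm := (isSymmDecreasing_restrict_iff hN).2 hgs.1
  have hffs := identDistrib_subtype_of_forall_hausdorffMeasure_eq hn hf'.measurable
    (hfsymm.measurable hN) hfs.2
  have hggs := identDistrib_subtype_of_forall_hausdorffMeasure_eq hn hg'.measurable
    (hgsymm.measurable hN) hgs.2
  have hfint := integrable_of_continuous (μ := μH[n]) hf'
  have hgint := integrable_of_continuous (μ := μH[n]) hg'
  rw [setIntegral_setIntegral_sphere_eq_rieszForm hn hk.monotoneOn hfint hgint,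
    setIntegral_setIntegral_sphere_eq_rieszForm hn hk.monotoneOn (hffs.integrable_iff.1 hfint)
      (hggs.integrable_iff.1 hgint)] at hle
  obtain ⟨p, hp, hfp, hgp⟩ := exists_common_pole_of_rieszForm_le
    (fun u => (sphereReflection u).measurePreserving_hausdorffMeasure _) hk
    (ne_zero_of_mem_unit_sphere ⟨N, hN⟩) hf' hg' (exists_ne_of_not_forall_mem_eq hfc)
    (exists_ne_of_not_forall_mem_eq hgc) hfsymm hgsymm hffs hggs hle
  exact ⟨p, hp, (isSymmDecreasing_restrict_iff hp).1 hfp, (isSymmDecreasing_restrict_iff hp).1 hgp⟩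

/-- Equality case in the spherical Riesz rearrangement inequality (Baernstein–Taylor):
if `k` is bounded and strictly increasing on `[-1,1]`, `f, g ∈ C(Sⁿ)` are non-constant, and
`∫∫ k(x·y) f(x) g(y) = ∫∫ k(x·y) f*(x) g*(y)` where `f*, g*` are the symmetric decreasing
rearrangements (with respect to the north pole `N`), then `f` and `g` are radial symmetric
and decreasing with respect to the same point. -/
theorem stmt_10 (n : ℕ) (k : ℝ → ℝ)
    (hk : StrictMonoOn k (Icc (-1 : ℝ) 1))
    (hkb : ∃ C : ℝ, ∀ t ∈ Icc (-1 : ℝ) 1, |k t| ≤ C)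
    (f g fs gs : EuclideanSpace ℝ (Fin (n + 1)) → ℝ)
    (hf : ContinuousOn f (sphere (0 : EuclideanSpace ℝ (Fin (n + 1))) 1))
    (hg : ContinuousOn g (sphere (0 : EuclideanSpace ℝ (Fin (n + 1))) 1))
    (hfc : ¬ ∃ c : ℝ, ∀ x ∈ sphere (0 : EuclideanSpace ℝ (Fin (n + 1))) 1, f x = c)
    (hgc : ¬ ∃ c : ℝ, ∀ x ∈ sphere (0 : EuclideanSpace ℝ (Fin (n + 1))) 1, g x = c)
    -- `fs` is the symmetrization of `f`: radial symmetric and decreasing with respect to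
    -- the north pole, and equidistributed with `f`.
    (hfs : (∃ φ : ℝ → ℝ, MonotoneOn φ (Icc (-1 : ℝ) 1) ∧
        ∀ x ∈ sphere (0 : EuclideanSpace ℝ (Fin (n + 1))) 1,
          fs x = φ ⟪x, EuclideanSpace.single (Fin.last n) (1 : ℝ)⟫) ∧
      ∀ t : ℝ, μH[(n : ℝ)] {x ∈ sphere (0 : EuclideanSpace ℝ (Fin (n + 1))) 1 | t < f x} =
        μH[(n : ℝ)] {x ∈ sphere (0 : EuclideanSpace ℝ (Fin (n + 1))) 1 | t < fs x})
    (hgs : (∃ ψ : ℝ → ℝ, MonotoneOn ψ (Icc (-1 : ℝ) 1) ∧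
        ∀ x ∈ sphere (0 : EuclideanSpace ℝ (Fin (n + 1))) 1,
          gs x = ψ ⟪x, EuclideanSpace.single (Fin.last n) (1 : ℝ)⟫) ∧
      ∀ t : ℝ, μH[(n : ℝ)] {x ∈ sphere (0 : EuclideanSpace ℝ (Fin (n + 1))) 1 | t < g x} =
        μH[(n : ℝ)] {x ∈ sphere (0 : EuclideanSpace ℝ (Fin (n + 1))) 1 | t < gs x})
    (heq : (∫ x in sphere (0 : EuclideanSpace ℝ (Fin (n + 1))) 1,
          (∫ y in sphere (0 : EuclideanSpace ℝ (Fin (n + 1))) 1,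
            k ⟪x, y⟫ * f x * g y ∂μH[(n : ℝ)]) ∂μH[(n : ℝ)]) =
        ∫ x in sphere (0 : EuclideanSpace ℝ (Fin (n + 1))) 1,
          (∫ y in sphere (0 : EuclideanSpace ℝ (Fin (n + 1))) 1,
            k ⟪x, y⟫ * fs x * gs y ∂μH[(n : ℝ)]) ∂μH[(n : ℝ)]) :
    ∃ p ∈ sphere (0 : EuclideanSpace ℝ (Fin (n + 1))) 1,
      (∃ φ : ℝ → ℝ, MonotoneOn φ (Icc (-1 : ℝ) 1) ∧
        ∀ x ∈ sphere (0 : EuclideanSpace ℝ (Fin (n + 1))) 1, f x = φ ⟪x, p⟫) ∧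
      (∃ ψ : ℝ → ℝ, MonotoneOn ψ (Icc (-1 : ℝ) 1) ∧
        ∀ x ∈ sphere (0 : EuclideanSpace ℝ (Fin (n + 1))) 1, g x = ψ ⟪x, p⟫) := by
  have : Fact (Module.finrank ℝ (EuclideanSpace ℝ (Fin (n + 1))) = n + 1) := ⟨by simp⟩
  exact stmt_10_general n (by simp) hk hf hg hfc hgc hfs hgs heq.ge
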